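/- arXiv:1306.5013 — 4 statements merged into one kernel-verified Lean document; each statement's English description precedes it below -/
import Mathlib

section
/- Let A be a real m×n matrix and let k be a positive integer with k < m and k < n. Then there exist a set of column indices L = {l_1 < ⋯ < l_k} ⊆ {1,…,n} and a real k×n matrix P such that, with A_c the m×k submatrix of A consisting of the columns indexed by L, B = AᵀA, B_s = A_cᵀA_c and B_k = Pᵀ B_s P, one has ‖A − A_c P‖₂ = ‖B − B_k‖₂^{1/2} ≤ C(n,k) · τ_{k+1}(A), where C(n,k) = (4k(n−k)+1)^{1/4} · (1 + √(n·k·(n−k)))^{1/2} and τ_{k+1}(A) is the (k+1)-st largest singular value of A. -/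
/-!
For a set `L` of `k` columns, take `P` so that `A_c P` is the orthogonal projection of `A` onto the
span of `A_c`. The residual `E = A - A_c P` satisfies `A_cᵀ E = 0`, so `AᵀA - Pᵀ A_cᵀ A_c P = Eᵀ E`
and the equality of norms is `‖EᵀE‖ = ‖E‖²`.

For the bound, choose `L` with maximal Gram determinant (squared volume), and assume first that this
is positive. Given `j ∉ L` and `B` of rank at most `k`, let `S` consist of the `k + 1` columns
`L ∪ {j}` of `A`. There is `x ≠ 0` killed by the same columns of `B`, so `‖S x‖ ≤ ‖A - B‖ ‖x‖`.
On the other hand `‖S x‖ ≥ |x_s| dist_s`, where `dist_s` is the distance from column `s` of `S` to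
the span of the others; since `dist_s² = vol²(S) / vol²(S without s)`, maximality gives
`dist_s ≥ dist_j = ‖E_j‖` (`residual_le`, through cofactors of `SᵀS`). Summing squares over `s`,
`‖E_j‖² ≤ (k + 1) ‖A - B‖²`, and as `E` vanishes on `L`, bounding the spectral norm by the Frobenius
norm gives `‖E‖² ≤ (n - k)(k + 1) ‖A - B‖²`. The constant `(n - k)(k + 1)` is at most `C(n,k)²`
(`const_bound`).

If every `k` columns are dependent, fewer columns already span the column space and `E = 0`. Both
cases are handled together in `exists_skeleton`, by letting `r ≤ k` be the largest number of
independent columns.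
-/

open scoped BigOperators
open Matrix

/-- Spectral (L2 operator) norm of a matrix. -/
noncomputable def specNorm {m n : Type*} [Fintype m] [Fintype n] [DecidableEq m] [DecidableEq n]
    (A : Matrix m n ℝ) : ℝ :=
  ‖(Matrix.toEuclideanLin A).toContinuousLinearMap‖

/-- The `(k+1)`-st largest singular value of a matrix, characterized (Eckart–Young)
as the spectral-norm distance from `A` to the set of matrices of rank at most `k`. -/
noncomputable def tauSucc {m n : Type*} [Fintype m] [Fintype n] [DecidableEq m] [DecidableEq n]
    (A : Matrix m n ℝ) (k : ℕ) : ℝ :=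
  sInf {t : ℝ | ∃ B : Matrix m n ℝ, B.rank ≤ k ∧ t = specNorm (A - B)}

/-! ### Gram determinants and heights -/

section
variable {m r : ℕ}

/-- The image under `S` of the `s`-th column of the adjugate of the Gram matrix `SᵀS`. When `S` has
independent columns it is, up to scaling, the component of column `s` orthogonal to the others. -/
noncomputable def dualVec (S : Matrix (Fin m) (Fin r) ℝ) (s : Fin r) : Fin m → ℝ :=
  S *ᵥ ((Sᵀ * S).adjugate *ᵥ Pi.single s 1)

theorem dualVec_dot (S : Matrix (Fin m) (Fin r) ℝ) (s : Fin r) (x : Fin r → ℝ) :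
    dualVec S s ⬝ᵥ (S *ᵥ x) = (Sᵀ * S).det * x s := by
  have h : (Sᵀ * S) *ᵥ ((Sᵀ * S).adjugate *ᵥ Pi.single s 1) =
      (Sᵀ * S).det • Pi.single s (1 : ℝ) := by
    rw [mulVec_mulVec, mul_adjugate, smul_mulVec, one_mulVec]
  rw [dotProduct_mulVec, ← mulVec_transpose, dualVec, mulVec_mulVec, h]
  simp

theorem dualVec_dot_self (S : Matrix (Fin m) (Fin r) ℝ) (s : Fin r) :
    dualVec S s ⬝ᵥ dualVec S s = (Sᵀ * S).det * (Sᵀ * S).adjugate s s := by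
  have := dualVec_dot S s ((Sᵀ * S).adjugate *ᵥ Pi.single s 1)
  rw [← dualVec] at this
  rw [this]; simp

/-- Cauchy–Schwarz for `S x` against a dual vector: the coordinate `x s` is controlled by the
distance from column `s` to the span of the others. -/
theorem det_sq_mul_le (S : Matrix (Fin m) (Fin r) ℝ) (s : Fin r) (x : Fin r → ℝ) :
    ((Sᵀ * S).det * x s) ^ 2 ≤
      ((Sᵀ * S).det * (Sᵀ * S).adjugate s s) * ((S *ᵥ x) ⬝ᵥ (S *ᵥ x)) := by
  rw [← dualVec_dot, ← dualVec_dot_self]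
  have := Finset.sum_mul_sq_le_sq_mul_sq Finset.univ (dualVec S s) (S *ᵥ x)
  simpa [dotProduct, sq] using this

/-- The diagonal cofactors of a Gram matrix are the Gram determinants with one column removed. -/
theorem adjugate_gram (S : Matrix (Fin m) (Fin (r + 1)) ℝ) (s : Fin (r + 1)) :
    (Sᵀ * S).adjugate s s =
      ((S.submatrix id s.succAbove)ᵀ * S.submatrix id s.succAbove).det := by
  rw [adjugate_fin_succ_eq_det_submatrix]
  have : (-1 : ℝ) ^ ((s : ℕ) + s) = 1 := Even.neg_one_pow ⟨_, rfl⟩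
  rw [this, one_mul]
  rfl

theorem gram_det_nonneg (S : Matrix (Fin m) (Fin r) ℝ) : 0 ≤ (Sᵀ * S).det := by
  have := (posSemidef_conjTranspose_mul_self S).det_nonneg
  simpa using this

/-- Gram determinants: squared volume is squared base volume times squared height. -/
theorem gram_det_succ (S : Matrix (Fin m) (Fin (r + 1)) ℝ) (p : Fin r → ℝ) (e : Fin m → ℝ)
    (he : e = S.col 0 - S.submatrix id Fin.succ *ᵥ p)
    (ho : (S.submatrix id Fin.succ)ᵀ *ᵥ e = 0) :
    (Sᵀ * S).det =
      ((S.submatrix id Fin.succ)ᵀ * S.submatrix id Fin.succ).det * (e ⬝ᵥ e) := by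
  have hV := adjugate_gram S 0
  simp only [Fin.succAbove_zero] at hV
  rw [← hV]
  have key : ∀ z : Fin (r + 1) → ℝ,
      S *ᵥ z = z 0 • S.col 0 + S.submatrix id Fin.succ *ᵥ (fun i => z i.succ) := by
    intro z; ext a
    simp [mulVec, dotProduct, Fin.sum_univ_succ, mul_comm]
  have ho' : ∀ q, e ⬝ᵥ (S.submatrix id Fin.succ *ᵥ q) = 0 := by
    intro q; rw [dotProduct_mulVec, ← mulVec_transpose, ho, zero_dotProduct]
  have hee : e ⬝ᵥ e = e ⬝ᵥ S.col 0 := by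
    conv_lhs => rw [he, dotProduct_sub, ← he, ho', sub_zero]
  have heS : e = S *ᵥ (Fin.cons 1 (-p)) := by
    rw [key, he]; simp only [Fin.cons_zero, Fin.cons_succ, one_smul, sub_eq_add_neg]
    congr 1
    rw [← mulVec_neg]
  have h1 : dualVec S 0 ⬝ᵥ e = (Sᵀ * S).det := by
    rw [heS, dualVec_dot]; simp
  have h2 : dualVec S 0 ⬝ᵥ e = (Sᵀ * S).adjugate 0 0 * (e ⬝ᵥ e) := by
    rw [dotProduct_comm, dualVec, key, dotProduct_add, ho', add_zero, dotProduct_smul, ← hee]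
    simp
  rw [← h1, h2]

theorem gram_det_eq_zero_of_not_injective {n : ℕ} (A : Matrix (Fin m) (Fin n) ℝ)
    (c : Fin r → Fin n) (hc : ¬ Function.Injective c) :
    ((A.submatrix id c)ᵀ * A.submatrix id c).det = 0 := by
  simp only [Function.Injective, not_forall] at hc
  obtain ⟨a, b, hab, hne⟩ := hc
  refine det_zero_of_row_eq hne ?_
  ext j
  simp [mul_apply, hab]

/-! ### Column selection and the spectral norm -/

theorem submatrix_eq_mul {n r' : ℕ} (A : Matrix (Fin m) (Fin n) ℝ) (l : Fin r → Fin n)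
    (l' : Fin r' → Fin n) (h : Set.range l ⊆ Set.range l') :
    ∃ Q : Matrix (Fin r') (Fin r) ℝ, A.submatrix id l = A.submatrix id l' * Q := by
  choose f hf using fun i => h (Set.mem_range_self i)
  refine ⟨(1 : Matrix (Fin r') (Fin r') ℝ).submatrix id f, ?_⟩
  ext a i
  simp [mul_apply, one_apply, hf]

/-- Definitional bridge to the `L2` operator norm, whose instance is not global. -/
theorem specNorm_eq {m n : ℕ} (A : Matrix (Fin m) (Fin n) ℝ) :
    specNorm A = (Matrix.instL2OpNormedAddCommGroup (m := Fin m) (n := Fin n) (𝕜 := ℝ)).toNorm.norm A :=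
  rfl

theorem specNorm_nonneg {m n : ℕ} (A : Matrix (Fin m) (Fin n) ℝ) : 0 ≤ specNorm A :=
  norm_nonneg _

theorem specNorm_gram {m n : ℕ} (A : Matrix (Fin m) (Fin n) ℝ) :
    specNorm (Aᵀ * A) = specNorm A * specNorm A := by
  have := Matrix.l2_opNorm_conjTranspose_mul_self A
  simpa [specNorm_eq] using this

theorem mulVec_dot_le {m n : ℕ} (A : Matrix (Fin m) (Fin n) ℝ) (x : Fin n → ℝ) :
    (A *ᵥ x) ⬝ᵥ (A *ᵥ x) ≤ specNorm A ^ 2 * (x ⬝ᵥ x) := by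
  have := (Matrix.toEuclideanLin A).toContinuousLinearMap.le_opNorm (WithLp.toLp 2 x)
  have h2 := pow_le_pow_left₀ (norm_nonneg _) this 2
  rw [mul_pow, EuclideanSpace.real_norm_sq_eq, EuclideanSpace.real_norm_sq_eq] at h2
  simpa [specNorm, dotProduct, sq] using h2

theorem specNorm_sq_le_frobenius {m n : ℕ} (E : Matrix (Fin m) (Fin n) ℝ) :
    specNorm E ^ 2 ≤ ∑ j, E.col j ⬝ᵥ E.col j := by
  have h0 : 0 ≤ ∑ j, E.col j ⬝ᵥ E.col j :=
    Finset.sum_nonneg fun j _ => Finset.sum_nonneg fun i _ => mul_self_nonneg _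
  rw [← Real.sq_sqrt h0]
  refine pow_le_pow_left₀ (specNorm_nonneg _) ?_ 2
  refine ContinuousLinearMap.opNorm_le_bound _ (Real.sqrt_nonneg _) fun x => ?_
  refine abs_le_of_sq_le_sq' ?_ (by positivity) |>.2
  rw [mul_pow, Real.sq_sqrt h0, EuclideanSpace.real_norm_sq_eq, EuclideanSpace.real_norm_sq_eq]
  simp only [dotProduct]
  rw [Finset.sum_comm, Finset.sum_mul]
  refine Finset.sum_le_sum fun i _ => ?_
  have := Finset.sum_mul_sq_le_sq_mul_sq Finset.univ (E i) x
  simpa [mulVec, dotProduct, sq, Matrix.toLpLin_apply] using this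


/-! ### Maximal-volume columns -/

/-- The Gram determinant of the columns of `A` selected by `c`. -/
noncomputable def gramDet {n : ℕ} (A : Matrix (Fin m) (Fin n) ℝ) (c : Fin r → Fin n) : ℝ :=
  ((A.submatrix id c)ᵀ * A.submatrix id c).det

/-- Orthogonal projection onto the span of the columns `l`, via the normal equations. -/
theorem exists_projection {n : ℕ} (A : Matrix (Fin m) (Fin n) ℝ) (l : Fin r → Fin n)
    (hV : gramDet A l ≠ 0) :
    ∃ P : Matrix (Fin r) (Fin n) ℝ,
      (A.submatrix id l)ᵀ * (A - A.submatrix id l * P) = 0 ∧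
      ∀ j, gramDet A (Fin.cons j l : Fin (r + 1) → Fin n) =
        gramDet A l *
          ((A - A.submatrix id l * P).col j ⬝ᵥ (A - A.submatrix id l * P).col j) := by
  set C := A.submatrix id l with hC
  have h0 : Cᵀ * (A - C * ((Cᵀ * C)⁻¹ * (Cᵀ * A))) = 0 := by
    have hu : IsUnit (Cᵀ * C).det := isUnit_iff_ne_zero.mpr hV
    rw [Matrix.mul_sub, ← Matrix.mul_assoc Cᵀ C, ← Matrix.mul_assoc (Cᵀ * C),
      mul_nonsing_inv _ hu, Matrix.one_mul, sub_self]
  refine ⟨(Cᵀ * C)⁻¹ * (Cᵀ * A), h0, fun j => ?_⟩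
  set P := (Cᵀ * C)⁻¹ * (Cᵀ * A)
  refine gram_det_succ (A.submatrix id (Fin.cons j l : Fin (r + 1) → Fin n)) (P.col j) _ ?_ ?_
  · ext a
    simp [mul_apply, mulVec, dotProduct, C]
  · ext a
    simpa [mul_apply, mulVec, dotProduct, C] using congrFun (congrFun h0 a) j

/-- A matrix of rank at most `r` kills a nonzero combination of any `r + 1` of its columns. -/
theorem exists_kernel {n : ℕ} (B : Matrix (Fin m) (Fin n) ℝ) (hB : B.rank ≤ r)
    (c : Fin (r + 1) → Fin n) :
    ∃ x : Fin (r + 1) → ℝ, x ≠ 0 ∧ B.submatrix id c *ᵥ x = 0 := by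
  by_contra! h
  have hinj : Function.Injective (B.submatrix id c).mulVecLin := by
    rw [← LinearMap.ker_eq_bot, LinearMap.ker_eq_bot']
    intro x hx
    by_contra hne
    exact h x hne hx
  have h1 : (B.submatrix id c).rank = r + 1 := by
    rw [Matrix.rank, LinearMap.finrank_range_of_inj hinj]; simp
  obtain ⟨Q, hQ⟩ := submatrix_eq_mul B c id (by simp)
  have h2 : (B.submatrix id c).rank ≤ B.rank := by
    rw [hQ]; exact rank_mul_le_left _ _
  omega

/-- If the `r` columns `l` have maximal volume, each residual column is at most `√(r+1)` times
the distance from `A` to any matrix of rank at most `r`. Here `d` is the squared residual of column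
`j`, characterized by the ratio of Gram determinants. -/
theorem residual_le {n : ℕ} (A B : Matrix (Fin m) (Fin n) ℝ) (l : Fin r → Fin n)
    (hV : 0 < gramDet A l) (hmax : ∀ c : Fin r → Fin n, gramDet A c ≤ gramDet A l)
    (hB : B.rank ≤ r) (j : Fin n) (d : ℝ) (hd0 : 0 ≤ d)
    (hd : gramDet A (Fin.cons j l : Fin (r + 1) → Fin n) = gramDet A l * d) :
    d ≤ (r + 1) * specNorm (A - B) ^ 2 := by
  rcases hd0.eq_or_lt with rfl | hdpos
  · positivity
  set c : Fin (r + 1) → Fin n := Fin.cons j l with hc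
  have hD : 0 < gramDet A c := by rw [hd]; positivity
  have hcinj : Function.Injective c := by
    by_contra h
    exact hD.ne' (gram_det_eq_zero_of_not_injective A c h)
  obtain ⟨x, hx0, hx⟩ := exists_kernel B hB c
  have hxx : 0 < x ⬝ᵥ x := by
    have := dotProduct_star_self_pos_iff.mpr hx0
    simpa using this
  set S := A.submatrix id c with hS
  -- Cauchy–Schwarz against each dual vector, with maximality bounding its length.
  have hcoord : ∀ s, d * x s ^ 2 ≤ (S *ᵥ x) ⬝ᵥ (S *ᵥ x) := by
    intro s
    have h1 := det_sq_mul_le S s x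
    have h2 : (Sᵀ * S).adjugate s s ≤ gramDet A l := by
      rw [adjugate_gram]; exact hmax (c ∘ s.succAbove)
    have h3 : 0 ≤ (S *ᵥ x) ⬝ᵥ (S *ᵥ x) := Finset.sum_nonneg fun i _ => mul_self_nonneg _
    have hdet : (Sᵀ * S).det = gramDet A l * d := hd
    have h4 : (gramDet A l * d) * gramDet A l * (d * x s ^ 2) ≤
        (gramDet A l * d) * gramDet A l * ((S *ᵥ x) ⬝ᵥ (S *ᵥ x)) := by
      calc _ = ((Sᵀ * S).det * x s) ^ 2 := by rw [hdet]; ring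
        _ ≤ _ := h1
        _ ≤ _ := by rw [hdet]; gcongr
    exact le_of_mul_le_mul_left h4 (by positivity)
  have hsum : d * (x ⬝ᵥ x) ≤ (r + 1) * ((S *ᵥ x) ⬝ᵥ (S *ᵥ x)) := by
    have := Finset.sum_le_sum fun s (_ : s ∈ Finset.univ) => hcoord s
    rw [← Finset.mul_sum] at this
    simpa [dotProduct, sq] using this
  -- `S x` is the image under `A - B` of `x` spread over the coordinates selected by `c`.
  set z : Fin n → ℝ := (1 : Matrix (Fin n) (Fin n) ℝ).submatrix id c *ᵥ x with hz
  have hmul : ∀ M : Matrix (Fin m) (Fin n) ℝ, M *ᵥ z = M.submatrix id c *ᵥ x := by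
    intro M
    rw [hz, mulVec_mulVec]
    congr 1
    ext a b
    simp [mul_apply, one_apply]
  have hzz : z ⬝ᵥ z = x ⬝ᵥ x := by
    rw [hz, dotProduct_mulVec, ← mulVec_transpose, mulVec_mulVec]
    have : ((1 : Matrix (Fin n) (Fin n) ℝ).submatrix id c)ᵀ *
        (1 : Matrix (Fin n) (Fin n) ℝ).submatrix id c = 1 := by
      ext a b
      simp [mul_apply, one_apply, hcinj.eq_iff, eq_comm]
    rw [this, one_mulVec]
  have hSx : S *ᵥ x = (A - B) *ᵥ z := by
    rw [sub_mulVec, hmul, hmul, hx, sub_zero]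
  have hfin := mulVec_dot_le (A - B) z
  rw [← hSx, hzz] at hfin
  refine le_of_mul_le_mul_right (hsum.trans ?_) hxx
  rw [mul_assoc]
  gcongr

/-! ### The constant -/

/-- `(k + 1)(n - k)` is dominated by the square of the stated constant. -/
theorem const_bound (n k : ℝ) (hk : 1 ≤ k) (hkn : k + 1 ≤ n) :
    (n - k) * (k + 1) ≤
      ((4 * k * (n - k) + 1 : ℝ) ^ ((1 : ℝ) / 4) *
            (1 + Real.sqrt (n * k * (n - k))) ^ ((1 : ℝ) / 2)) ^ 2 := by
  have ha : 1 ≤ k * (n - k) := by nlinarith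
  have h1 : ((4 * k * (n - k) + 1 : ℝ) ^ ((1 : ℝ) / 4)) ^ 2 = √(4 * k * (n - k) + 1) := by
    rw [← Real.rpow_natCast, ← Real.rpow_mul (by nlinarith), Real.sqrt_eq_rpow]; norm_num
  have h2 : ((1 + √(n * k * (n - k))) ^ ((1 : ℝ) / 2)) ^ 2 = 1 + √(n * k * (n - k)) := by
    rw [← Real.sqrt_eq_rpow, Real.sq_sqrt (by positivity)]
  rw [mul_pow, h1, h2]
  have h3 : 2 * √(k * (n - k)) ≤ √(4 * k * (n - k) + 1) := by
    apply Real.le_sqrt_of_sq_le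
    rw [mul_pow, Real.sq_sqrt (by linarith)]; linarith
  have h4 : √(k * (n - k)) ≤ 1 + √(n * k * (n - k)) := by
    have : √(k * (n - k)) ≤ √(n * k * (n - k)) := Real.sqrt_le_sqrt (by nlinarith)
    linarith
  calc (n - k) * (k + 1) ≤ 2 * (k * (n - k)) := by nlinarith
    _ = 2 * √(k * (n - k)) * √(k * (n - k)) := by
      rw [mul_assoc, Real.mul_self_sqrt (by linarith)]
    _ ≤ _ := by gcongr

/-! ### The interpolative decomposition -/

theorem exists_strictMono_superset {n k : ℕ} (hkn : k ≤ n) (hr : r ≤ k) (l : Fin r → Fin n) :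
    ∃ l' : Fin k → Fin n, StrictMono l' ∧ Set.range l ⊆ Set.range l' := by
  have hcard : (Finset.univ.image l).card ≤ k :=
    (Finset.card_image_le.trans (by simp)).trans hr
  obtain ⟨s, hs, -, hsk⟩ := Finset.exists_subsuperset_card_eq
    (Finset.subset_univ (Finset.univ.image l)) hcard (by simpa using hkn)
  refine ⟨s.orderEmbOfFin hsk, (s.orderEmbOfFin hsk).strictMono, ?_⟩
  rw [Finset.range_orderEmbOfFin]
  rintro _ ⟨i, rfl⟩
  exact hs (Finset.mem_image_of_mem _ (Finset.mem_univ i))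

/-- A good column skeleton. Take `r ≤ k` maximal such that some `r` columns are independent: if
`r < k` those columns span everything, otherwise maximal volume applies. -/
theorem exists_skeleton {n : ℕ} (A : Matrix (Fin m) (Fin n) ℝ) (k : ℕ) (hkn : k ≤ n) :
    ∃ (l : Fin k → Fin n) (P : Matrix (Fin k) (Fin n) ℝ), StrictMono l ∧
      (A.submatrix id l)ᵀ * (A - A.submatrix id l * P) = 0 ∧
      (∀ i, (A - A.submatrix id l * P).col (l i) = 0) ∧
      ∀ j (B : Matrix (Fin m) (Fin n) ℝ), B.rank ≤ k →
        (A - A.submatrix id l * P).col j ⬝ᵥ (A - A.submatrix id l * P).col j ≤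
          (k + 1) * specNorm (A - B) ^ 2 := by
  classical
  let p : ℕ → Prop := fun r => ∃ c : Fin r → Fin n, gramDet A c ≠ 0
  have hp0 : p 0 := ⟨Fin.elim0, by simp [gramDet]⟩
  set r := Nat.findGreatest p k
  have hr : r ≤ k := Nat.findGreatest_le k
  obtain ⟨c, hc⟩ : p r := Nat.findGreatest_spec (Nat.zero_le k) hp0
  have : Nonempty (Fin r → Fin n) := ⟨c⟩
  obtain ⟨l, hmax⟩ := Finite.exists_max (fun l : Fin r → Fin n => gramDet A l)
  have hV : 0 < gramDet A l := ((gram_det_nonneg _).lt_of_ne hc.symm).trans_le (hmax c)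
  have hlinj : Function.Injective l := by
    by_contra h
    exact hV.ne' (gram_det_eq_zero_of_not_injective A l h)
  obtain ⟨P, hP, hdet⟩ := exists_projection A l hV.ne'
  obtain ⟨l', hl', hsub⟩ := exists_strictMono_superset hkn hr l
  obtain ⟨Q, hQ⟩ := submatrix_eq_mul A l l' hsub
  have hE : A - A.submatrix id l' * (Q * P) = A - A.submatrix id l * P := by
    rw [← Matrix.mul_assoc, ← hQ]
  have hnn : ∀ j, 0 ≤ (A - A.submatrix id l * P).col j ⬝ᵥ (A - A.submatrix id l * P).col j :=
    fun j => Finset.sum_nonneg fun i _ => mul_self_nonneg _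
  have hcol : ∀ j, gramDet A (Fin.cons j l : Fin (r + 1) → Fin n) = 0 →
      (A - A.submatrix id l * P).col j = 0 := by
    intro j h
    rw [hdet] at h
    exact dotProduct_self_eq_zero.mp ((mul_eq_zero.mp h).resolve_left hV.ne')
  refine ⟨l', Q * P, hl', ?_⟩
  rw [hE]
  rcases hr.lt_or_eq with hlt | heq
  · have hzero : A - A.submatrix id l * P = 0 := by
      ext a j
      refine congrFun (hcol j ?_) a
      by_contra h
      exact Nat.findGreatest_is_greatest (Nat.lt_succ_self r) hlt ⟨_, h⟩
    rw [hzero]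
    refine ⟨by simp, fun i => rfl, fun j B _ => ?_⟩
    have : (0 : Matrix (Fin m) (Fin n) ℝ).col j = 0 := rfl
    rw [this, dotProduct_zero]
    positivity
  · have hsub' : Set.range l' ⊆ Set.range l := by
      have : Set.range l = Set.range l' := by
        refine Set.eq_of_subset_of_ncard_le hsub ?_
        rw [Set.ncard_range_of_injective hl'.injective, Set.ncard_range_of_injective hlinj]
        simp [heq]
      exact this.symm.subset
    obtain ⟨Q', hQ'⟩ := submatrix_eq_mul A l' l hsub'
    refine ⟨?_, fun i => ?_, fun j B hB => ?_⟩
    · rw [hQ', transpose_mul, Matrix.mul_assoc, hP, Matrix.mul_zero]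
    · obtain ⟨i', hi'⟩ := hsub' (Set.mem_range_self i)
      refine hcol _ (gram_det_eq_zero_of_not_injective A _ fun h => ?_)
      have h01 : (0 : Fin (r + 1)) = i'.succ := h (by simp [hi'])
      exact (Fin.succ_ne_zero i').symm h01
    · have := residual_le A B l hV hmax (hB.trans heq.ge) j _ (hnn j) (hdet j)
      have hrk : (r : ℝ) = k := by exact_mod_cast heq
      rwa [hrk] at this

end

/-- Existence of a symmetric interpolative decomposition of the Gram
matrix `B = AᵀA` built from a column skeleton of `A`, with
`‖A − A_c P‖₂ = ‖B − B_k‖₂^{1/2} ≤ C(n,k) τ_{k+1}(A)` where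
`C(n,k) = (4k(n−k)+1)^{1/4} (1+√(nk(n−k)))^{1/2}`. -/
theorem stmt2 {m n : ℕ} (A : Matrix (Fin m) (Fin n) ℝ) (k : ℕ)
    (hk : 0 < k) (hkm : k < m) (hkn : k < n) :
    ∃ (l : Fin k → Fin n) (P : Matrix (Fin k) (Fin n) ℝ),
      StrictMono l ∧
      (specNorm (A - A.submatrix id l * P) =
          Real.sqrt (specNorm (Aᵀ * A - Pᵀ * ((A.submatrix id l)ᵀ * A.submatrix id l) * P))) ∧
      specNorm (A - A.submatrix id l * P) ≤
        ((4 * k * (n - k) + 1 : ℝ) ^ ((1 : ℝ) / 4) *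
            (1 + Real.sqrt (n * k * (n - k))) ^ ((1 : ℝ) / 2)) * tauSucc A k := by
  obtain ⟨l, P, hl, horth, hzero, hbound⟩ := exists_skeleton A k hkn.le
  refine ⟨l, P, hl, ?_, ?_⟩
  · have hEE : Aᵀ * A - Pᵀ * ((A.submatrix id l)ᵀ * A.submatrix id l) * P =
        (A - A.submatrix id l * P)ᵀ * (A - A.submatrix id l * P) := by
      have h1 := horth
      set C := A.submatrix id l
      rw [Matrix.mul_sub, sub_eq_zero] at h1
      rw [transpose_sub, Matrix.sub_mul, transpose_mul, Matrix.mul_assoc Pᵀ Cᵀ, horth,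
        Matrix.mul_zero, sub_zero, Matrix.mul_sub]
      have h3 : Aᵀ * C = Pᵀ * (Cᵀ * C) := by
        have := congrArg transpose h1
        simpa [Matrix.mul_assoc] using this
      rw [← Matrix.mul_assoc Aᵀ C, h3]
    rw [hEE, specNorm_gram, Real.sqrt_mul_self (specNorm_nonneg _)]
  · set E := A - A.submatrix id l * P with hE
    have hkR : (1 : ℝ) ≤ k := by exact_mod_cast hk
    have hknR : (k : ℝ) + 1 ≤ n := by exact_mod_cast hkn
    have hconst := const_bound n k hkR hknR
    set K : ℝ := (4 * k * (n - k) + 1 : ℝ) ^ ((1 : ℝ) / 4) *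
            (1 + Real.sqrt (n * k * (n - k))) ^ ((1 : ℝ) / 2) with hK
    have hKpos : 0 < K := by
      have : 0 ≤ (n : ℝ) - k := by linarith
      positivity
    rw [← div_le_iff₀' hKpos]
    refine le_csInf ⟨_, 0, by simp, rfl⟩ ?_
    rintro t ⟨B, hB, rfl⟩
    rw [div_le_iff₀' hKpos]
    refine abs_le_of_sq_le_sq' ?_ (mul_nonneg hKpos.le (specNorm_nonneg _)) |>.2
    have hsplit : ∑ j, E.col j ⬝ᵥ E.col j ≤
        (n - k) * ((k + 1) * specNorm (A - B) ^ 2) := by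
      -- Only the `n - k` columns outside the skeleton contribute.
      have h1 : ∑ j, E.col j ⬝ᵥ E.col j =
          ∑ j ∈ (Finset.univ.image l)ᶜ, E.col j ⬝ᵥ E.col j := by
        refine (Finset.sum_subset (Finset.subset_univ _) fun j _ hj => ?_).symm
        obtain ⟨i, rfl⟩ : ∃ i, l i = j := by simpa using hj
        rw [hzero, dotProduct_zero]
      have hcard : (((Finset.univ.image l)ᶜ.card : ℕ) : ℝ) = n - k := by
        rw [Finset.card_compl, Finset.card_image_of_injective _ hl.injective]
        simp [Nat.cast_sub hkn.le]
      rw [h1, ← hcard, ← nsmul_eq_mul]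
      exact Finset.sum_le_card_nsmul _ _ _ fun j _ => hbound j B hB
    calc specNorm E ^ 2 ≤ _ := specNorm_sq_le_frobenius E
      _ ≤ _ := hsplit
      _ = (n - k) * (k + 1) * specNorm (A - B) ^ 2 := by ring
      _ ≤ K ^ 2 * specNorm (A - B) ^ 2 := by gcongr
      _ = _ := by ring
end

section
/- Let U = Σ_{l=1}^r T_l be a canonical tensor decomposition with scaled rank-one terms T_l = σ_l ⊗_{j=1}^d u_j^{(l)}, and let G be the r×r Gram matrix with entries G_{lm} = ⟨T_l, T_m⟩. Let L = {l_1,…,l_k} ⊆ {1,…,r} be an index set, G_s the k×k submatrix G[L,L], and P a real k×r matrix solving the normal equations G_s P = G[L,·] (i.e., Σ_{m'=1}^k ⟨T_{l_m}, T_{l_{m'}}⟩ P_{m'l} = ⟨T_{l_m}, T_l⟩ for all m = 1,…,k and l = 1,…,r). Suppose ‖G − Pᵀ G_s P‖₂ ≤ ε_k. Then the tensor ID U_k = Σ_{l=1}^r Σ_{m=1}^k P_{ml} T_{l_m} satisfies ‖U − U_k‖_F ≤ r · √ε_k. -/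
/-!
Let `A` be the matrix whose columns are the flattened terms `T_l`, and `B` the matrix of the
columns selected by `L`, so that `G = AᵀA` and `G_s = BᵀB`. The normal equations make the Gram
matrix of the residual `R = A - B P` equal to `E = G - Pᵀ G_s P` (`residual_gram`). Since
`U - U_k = R 1`, with `1` the all-ones vector,
`‖U - U_k‖² = 1ᵀ E 1 ≤ ‖E‖₂ ‖1‖² ≤ r ε_k ≤ r² ε_k` (`one_dotProduct_mulVec_one_le`).
-/

open scoped BigOperators
open Matrix

/-- Frobenius inner product of two tensors. -/
noncomputable def tinner {d : ℕ} {M : Fin d → ℕ}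
    (U V : ((j : Fin d) → Fin (M j)) → ℝ) : ℝ :=
  ∑ i : (j : Fin d) → Fin (M j), U i * V i

/-- Frobenius norm of a tensor. -/
noncomputable def tnorm {d : ℕ} {M : Fin d → ℕ}
    (U : ((j : Fin d) → Fin (M j)) → ℝ) : ℝ :=
  Real.sqrt (tinner U U)

/-- Rank-one tensor built from directional vectors. -/
def rankOne {d : ℕ} {M : Fin d → ℕ}
    (u : (j : Fin d) → (Fin (M j) → ℝ)) : ((j : Fin d) → Fin (M j)) → ℝ :=
  fun i => ∏ j, u j (i j)

/-- Quadratic forms are controlled by the spectral norm: `xᵀ E x ≤ ‖E‖₂ ‖x‖²`, at `x = 1`. -/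
lemma one_dotProduct_mulVec_one_le {r : ℕ} (E : Matrix (Fin r) (Fin r) ℝ) :
    (1 : Fin r → ℝ) ⬝ᵥ (E *ᵥ 1) ≤ specNorm E * r := by
  set x : EuclideanSpace ℝ (Fin r) := WithLp.toLp 2 1 with hx
  have hnorm : ‖x‖ * ‖x‖ = r := by
    rw [← pow_two, EuclideanSpace.norm_sq_eq]
    simp [hx]
  have hinner : (1 : Fin r → ℝ) ⬝ᵥ (E *ᵥ 1) =
      inner ℝ x ((Matrix.toEuclideanLin E).toContinuousLinearMap x) := by
    simp [hx, PiLp.inner_apply, dotProduct, Matrix.toLpLin_apply]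
  rw [hinner]
  calc inner ℝ x ((Matrix.toEuclideanLin E).toContinuousLinearMap x)
      ≤ ‖x‖ * ‖(Matrix.toEuclideanLin E).toContinuousLinearMap x‖ := real_inner_le_norm _ _
    _ ≤ ‖x‖ * (specNorm E * ‖x‖) := by
        gcongr
        exact ContinuousLinearMap.le_opNorm _ _
    _ = specNorm E * r := by rw [← hnorm]; ring

/-- When `P` solves the normal equations, `B P` is the orthogonal projection of the columns of `A`
onto the column space of `B`, so the two cross terms in the Gram matrix of the residual both equal
the Gram matrix of the projection. -/
lemma residual_gram {ι m n : Type*} [Fintype ι] [Fintype m]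
    (A : Matrix ι n ℝ) (B : Matrix ι m ℝ) (P : Matrix m n ℝ)
    (h : Bᵀ * B * P = Bᵀ * A) :
    (A - B * P)ᵀ * (A - B * P) = Aᵀ * A - Pᵀ * (Bᵀ * B) * P := by
  have h' : Aᵀ * B = Pᵀ * (Bᵀ * B) := by
    simpa [Matrix.transpose_mul, Matrix.mul_assoc] using (congrArg Matrix.transpose h).symm
  have h1 : Aᵀ * (B * P) = Pᵀ * (Bᵀ * B) * P := by rw [← Matrix.mul_assoc, h']
  have h2 : Pᵀ * Bᵀ * A = Pᵀ * (Bᵀ * B) * P := by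
    rw [Matrix.mul_assoc, ← h]; simp only [Matrix.mul_assoc]
  have h3 : Pᵀ * Bᵀ * (B * P) = Pᵀ * (Bᵀ * B) * P := by simp only [Matrix.mul_assoc]
  rw [Matrix.transpose_sub, Matrix.transpose_mul, Matrix.sub_mul, Matrix.mul_sub, Matrix.mul_sub,
    h1, h2, h3]
  abel

/-- Tensor ID via the Gram matrix: if the symmetric interpolative
decomposition `Pᵀ G_s P` of the Gram matrix `G` of the scaled rank-one terms has
spectral-norm error at most `ε_k`, and `P` solves the normal equations
`G_s P = G[L,·]`, then the resulting tensor ID satisfies `‖U − U_k‖_F ≤ r √ε_k`. -/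
theorem stmt3 {d r k : ℕ} {M : Fin d → ℕ}
    (σ : Fin r → ℝ) (u : Fin r → (j : Fin d) → (Fin (M j) → ℝ))
    (T : Fin r → (((j : Fin d) → Fin (M j)) → ℝ))
    (hT : ∀ l i, T l i = σ l * rankOne (u l) i)
    (U : ((j : Fin d) → Fin (M j)) → ℝ)
    (hU : ∀ i, U i = ∑ l, T l i)
    (G : Matrix (Fin r) (Fin r) ℝ)
    (hG : ∀ l m', G l m' = tinner (T l) (T m'))
    (lm : Fin k → Fin r) (hinj : Function.Injective lm)
    (P : Matrix (Fin k) (Fin r) ℝ)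
    (hnormal : ∀ (m' : Fin k) (l : Fin r),
      ∑ m'' : Fin k, G (lm m') (lm m'') * P m'' l = G (lm m') l)
    (εk : ℝ)
    (herr : specNorm (G - Pᵀ * G.submatrix lm lm * P) ≤ εk)
    (Uk : ((j : Fin d) → Fin (M j)) → ℝ)
    (hUk : ∀ i, Uk i = ∑ l : Fin r, ∑ m' : Fin k, P m' l * T (lm m') i) :
    tnorm (fun i => U i - Uk i) ≤ r * Real.sqrt εk := by
  set A : Matrix ((j : Fin d) → Fin (M j)) (Fin r) ℝ := Matrix.of fun i l => T l i with hA
  set B : Matrix ((j : Fin d) → Fin (M j)) (Fin k) ℝ := A.submatrix id lm with hB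
  have hGA : G = Aᵀ * A := by
    ext l m
    simp [hG, tinner, hA, Matrix.mul_apply]
  have hGB : G.submatrix lm lm = Bᵀ * B := by
    ext l m
    simp [hG, tinner, hA, hB, Matrix.mul_apply]
  have hN : Bᵀ * B * P = Bᵀ * A := by
    rw [← hGB]
    ext m l
    rw [Matrix.mul_apply]
    simp only [Matrix.submatrix_apply]
    rw [hnormal, hG]
    simp [tinner, hA, hB, Matrix.mul_apply]
  rw [hGB, hGA, ← residual_gram A B P hN] at herr
  have hdiff : (fun i => U i - Uk i) = (A - B * P) *ᵥ 1 := by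
    funext i
    simp [hU, hUk, hA, hB, Matrix.mulVec, dotProduct, Matrix.mul_apply, mul_comm]
  have hsq : tinner (fun i => U i - Uk i) (fun i => U i - Uk i) =
      (1 : Fin r → ℝ) ⬝ᵥ (((A - B * P)ᵀ * (A - B * P)) *ᵥ 1) := by
    rw [hdiff, ← Matrix.mulVec_mulVec, Matrix.dotProduct_mulVec, Matrix.vecMul_transpose]
    rfl
  have hε : 0 ≤ εk := le_trans (norm_nonneg _) herr
  -- `r ≤ r²` holds for every natural number, including `r = 0`.
  have hr : (r : ℝ) ≤ (r : ℝ) ^ 2 := by exact_mod_cast Nat.le_self_pow two_ne_zero r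
  unfold tnorm
  apply Real.sqrt_le_iff.mpr
  refine ⟨by positivity, ?_⟩
  rw [hsq, mul_pow, Real.sq_sqrt hε]
  calc _ ≤ specNorm ((A - B * P)ᵀ * (A - B * P)) * r := one_dotProduct_mulVec_one_le _
    _ ≤ εk * r := by gcongr
    _ ≤ (r : ℝ) ^ 2 * εk := by nlinarith
end

section
/- Let A be a real m×n matrix, A_c a real m×k matrix, and P a real k×n matrix solving the normal equations A_cᵀ A_c P = A_cᵀ A. Set A_k = A_c P, B = AᵀA, and B_k = A_kᵀ A_k. Then B − B_k = (A − A_k)ᵀ(A − A_k), and consequently ‖A − A_k‖₂ = ‖B − B_k‖₂^{1/2}. -/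
/-!
Multiplying the normal equations by `Pᵀ` gives `A_kᵀ A_k = A_kᵀ A`: the residual `A - A_k` is
orthogonal to the columns of `A_k`. Hence the cross terms in `(A - A_k)ᵀ (A - A_k)` collapse and
leave `AᵀA - A_kᵀ A_k`. The norm identity is then the C⋆-identity for the spectral norm.
-/

open scoped BigOperators
open Matrix

/-- The spectral norm satisfies the C⋆-identity `‖MᵀM‖₂ = ‖M‖₂²`, since it is the norm of the
`Matrix.Norms.L2Operator` scope and transposition is conjugate transposition over `ℝ`. -/
theorem specNorm_transpose_mul_self {m n : Type*} [Fintype m] [Fintype n] [DecidableEq m]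
    [DecidableEq n] (M : Matrix m n ℝ) : specNorm (Mᵀ * M) = specNorm M * specNorm M := by
  have h := Matrix.l2_opNorm_conjTranspose_mul_self M
  rw [Matrix.conjTranspose_eq_transpose_of_trivial] at h
  exact h

/-- If `P` solves the normal equations `A_cᵀ A_c P = A_cᵀ A`, then
with `A_k = A_c P`, `B = AᵀA` and `B_k = A_kᵀ A_k`, one has
`B − B_k = (A − A_k)ᵀ (A − A_k)` and `‖A − A_k‖₂ = ‖B − B_k‖₂^{1/2}`. -/
theorem stmt13 {m n k : ℕ}
    (A : Matrix (Fin m) (Fin n) ℝ) (Ac : Matrix (Fin m) (Fin k) ℝ)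
    (P : Matrix (Fin k) (Fin n) ℝ)
    (hP : Acᵀ * Ac * P = Acᵀ * A) :
    Aᵀ * A - (Ac * P)ᵀ * (Ac * P) = (A - Ac * P)ᵀ * (A - Ac * P) ∧
      specNorm (A - Ac * P) =
        Real.sqrt (specNorm (Aᵀ * A - (Ac * P)ᵀ * (Ac * P))) := by
  have hcross : (Ac * P)ᵀ * (Ac * P) = (Ac * P)ᵀ * A := by
    rw [Matrix.transpose_mul, Matrix.mul_assoc, ← Matrix.mul_assoc Acᵀ, hP, Matrix.mul_assoc]
  -- The Gram matrix on the left is symmetric, so the other cross term agrees with it as well.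
  have hcross' : Aᵀ * (Ac * P) = (Ac * P)ᵀ * (Ac * P) := by
    have h := congrArg Matrix.transpose hcross
    rw [Matrix.transpose_mul, Matrix.transpose_mul _ A, Matrix.transpose_transpose] at h
    exact h.symm
  have hgram : Aᵀ * A - (Ac * P)ᵀ * (Ac * P) = (A - Ac * P)ᵀ * (A - Ac * P) := by
    rw [Matrix.transpose_sub, Matrix.sub_mul, Matrix.mul_sub, Matrix.mul_sub, hcross', ← hcross,
      sub_self, sub_zero]
  refine ⟨hgram, ?_⟩
  rw [hgram, specNorm_transpose_mul_self, Real.sqrt_mul_self]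
  exact norm_nonneg _
end

section
/- Let A be a real m×n matrix and k a positive integer with k ≤ m and k ≤ n. Then there exist a real k×n matrix P and a real m×k matrix A_c whose columns constitute a subset of the columns of A, such that: (1) some subset of the columns of P makes up the k×k identity matrix; (2) no entry of P has absolute value greater than 1; (3) ‖P‖₂ ≤ √(k(n−k)+1); (4) the smallest singular value of P is at least 1; (5) A_c P = A when k = m or k = n; and (6) ‖A_c P − A‖₂ ≤ √(k(n−k)+1) · τ_{k+1}(A) when k < m and k < n, where τ_{k+1}(A) is the (k+1)-st largest singular value of A. -/
/-!
If `B = C D` has rank at most `k`, with `D` of size `k × n` and rank `k`, choose `k` columns `l`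
for which the minor `det D_l` has the largest modulus and put `P = D_l⁻¹ D`. Then `B_l P = B`, the
columns `l` of `P` form the identity, and by Cramer's rule the entries of `P` are quotients of
minors of modulus at most one (`exists_exact_interp`).

These `l` and `P` also serve for `A`: with `E` the matrix selecting the columns `l`, one has
`A_l P - A = -(A - B)(1 - E P)`. Up to the order of coordinates `P = [1 T]` and
`1 - E P = [[0, -T], [0, 1]]`, and both have squared norm at most `1 + ‖T‖_F² ≤ 1 + k (n - k)`
(`specNorm_coeff_le`, `specNorm_proj_le`). So the error of the interpolation is at most
`√(k (n - k) + 1) ‖A - B‖` (`interp_error_le`).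

The pair `(l, P)` depends on `B`, but all such pairs lie in one compact set, and a pair minimizing
the error there satisfies the bound for every `B` at once (`exists_best_interp`). Taking the
infimum over `B` gives the bound by the singular value; when `k = m` or `k = n`, taking `B = A`
gives exact reconstruction.
-/

open scoped BigOperators
open Matrix

/-! ### Spectral norm estimates for the coefficient matrix -/

/-- In block form this is `‖[1 T]‖² ≤ 1 + N` when `‖T‖² ≤ N`: take `s = T y` and `Y = ‖y‖²`. The cross
term is handled by Cauchy–Schwarz, `(∑ a s)² ≤ N (∑ a²) Y`, followed by AM–GM. -/
lemma sum_add_sq_le {ι : Type*} [Fintype ι] (a s : ι → ℝ) {N Y : ℝ} (hN : 0 ≤ N) (hY : 0 ≤ Y)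
    (hs : ∑ i, s i ^ 2 ≤ N * Y) :
    ∑ i, (a i + s i) ^ 2 ≤ (1 + N) * (∑ i, a i ^ 2 + Y) := by
  have hcs := Finset.sum_mul_sq_le_sq_mul_sq Finset.univ a s
  have hA : 0 ≤ ∑ i, a i ^ 2 := Finset.sum_nonneg fun i _ => sq_nonneg _
  have hexp : ∑ i, (a i + s i) ^ 2
      = ∑ i, a i ^ 2 + 2 * ∑ i, a i * s i + ∑ i, s i ^ 2 := by
    rw [Finset.mul_sum, ← Finset.sum_add_distrib, ← Finset.sum_add_distrib]
    exact Finset.sum_congr rfl fun i _ => by ring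
  have h2 : 2 * ∑ i, a i * s i ≤ N * ∑ i, a i ^ 2 + Y := by
    have h3 : (2 * ∑ i, a i * s i) ^ 2 ≤ (N * ∑ i, a i ^ 2 + Y) ^ 2 := by
      have := mul_le_mul_of_nonneg_left hs hA
      nlinarith [sq_nonneg (N * ∑ i, a i ^ 2 - Y)]
    exact (abs_le_of_sq_le_sq' h3 (by positivity)).2
  rw [hexp]
  nlinarith

lemma sum_split {k n : ℕ} {l : Fin k → Fin n} (hl : Function.Injective l) (f : Fin n → ℝ) :
    ∑ j, f j = ∑ i, f (l i) + ∑ j ∈ (Finset.univ.image l)ᶜ, f j := by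
  rw [← Finset.sum_add_sum_compl (Finset.univ.image l), Finset.sum_image hl.injOn]

lemma injective_of_submatrix {k n : ℕ} {l : Fin k → Fin n} {P : Matrix (Fin k) (Fin n) ℝ}
    (h1 : P.submatrix id l = 1) : Function.Injective l := by
  intro i i' h
  have h3 := congrFun (congrFun h1 i) i'
  have h4 := congrFun (congrFun h1 i) i
  simp only [submatrix_apply, id, ← h] at h3 h4
  rw [h3, one_apply, one_apply_eq] at h4
  by_contra hne
  simp [hne] at h4

lemma mulVec_split {k n : ℕ} {l : Fin k → Fin n} {P : Matrix (Fin k) (Fin n) ℝ}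
    (h1 : P.submatrix id l = 1) (x : Fin n → ℝ) (i : Fin k) :
    (P *ᵥ x) i = x (l i) + ∑ j ∈ (Finset.univ.image l)ᶜ, P i j * x j := by
  rw [mulVec, dotProduct, sum_split (injective_of_submatrix h1)]
  congr 1
  have h : ∀ i', P i (l i') = (1 : Matrix (Fin k) (Fin k) ℝ) i i' := fun i' =>
    congrFun (congrFun h1 i) i'
  simp [h, one_apply]

/-- The block of `P` outside the identity columns is bounded by its Frobenius norm. -/
lemma tail_sq_le {k n : ℕ} {l : Fin k → Fin n} {P : Matrix (Fin k) (Fin n) ℝ}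
    (h1 : P.submatrix id l = 1) (h2 : ∀ i j, |P i j| ≤ 1) (x : Fin n → ℝ) :
    ∑ i, (∑ j ∈ (Finset.univ.image l)ᶜ, P i j * x j) ^ 2
      ≤ (k * (n - k) : ℝ) * ∑ j ∈ (Finset.univ.image l)ᶜ, x j ^ 2 := by
  have hl := injective_of_submatrix h1
  have hkn : k ≤ n := by simpa using Fintype.card_le_of_injective l hl
  have hc : (((Finset.univ.image l)ᶜ.card : ℕ) : ℝ) = n - k := by
    rw [Finset.card_compl, Finset.card_image_of_injective _ hl]
    simp [Nat.cast_sub hkn]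
  have hrow : ∀ i ∈ (Finset.univ : Finset (Fin k)),
      (∑ j ∈ (Finset.univ.image l)ᶜ, P i j * x j) ^ 2
        ≤ (n - k : ℝ) * ∑ j ∈ (Finset.univ.image l)ᶜ, x j ^ 2 := by
    intro i _
    refine (Finset.sum_mul_sq_le_sq_mul_sq _ _ _).trans ?_
    refine mul_le_mul_of_nonneg_right ?_ (Finset.sum_nonneg fun j _ => sq_nonneg _)
    rw [← hc, Finset.cast_card]
    exact Finset.sum_le_sum fun j _ => (sq_le_one_iff_abs_le_one _).2 (h2 i j)
  refine (Finset.sum_le_sum hrow).trans (le_of_eq ?_)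
  simp [mul_assoc]

lemma specNorm_le_sqrt {p q : ℕ} (M : Matrix (Fin p) (Fin q) ℝ) {c : ℝ} (hc : 0 ≤ c)
    (h : ∀ x : Fin q → ℝ, ∑ i, (M *ᵥ x) i ^ 2 ≤ c * ∑ j, x j ^ 2) :
    specNorm M ≤ Real.sqrt c := by
  refine ContinuousLinearMap.opNorm_le_bound _ (Real.sqrt_nonneg _) fun x => ?_
  rw [EuclideanSpace.norm_eq, EuclideanSpace.norm_eq, ← Real.sqrt_mul hc]
  refine Real.sqrt_le_sqrt ?_
  simpa [Real.norm_eq_abs, sq_abs] using h x.ofLp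

lemma specNorm_coeff_le {k n : ℕ} {l : Fin k → Fin n} {P : Matrix (Fin k) (Fin n) ℝ}
    (h1 : P.submatrix id l = 1) (h2 : ∀ i j, |P i j| ≤ 1) :
    specNorm P ≤ Real.sqrt (k * (n - k) + 1) := by
  have hl := injective_of_submatrix h1
  have hkn : (k : ℝ) ≤ n := by exact_mod_cast (by simpa using Fintype.card_le_of_injective l hl)
  have hN : (0 : ℝ) ≤ k * (n - k) := mul_nonneg k.cast_nonneg (sub_nonneg.2 hkn)
  refine specNorm_le_sqrt _ (by positivity) fun x => ?_
  simp only [mulVec_split h1]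
  rw [sum_split hl (fun j => x j ^ 2), add_comm (_ * _) (1 : ℝ)]
  exact sum_add_sq_le _ _ hN (Finset.sum_nonneg fun j _ => sq_nonneg _) (tail_sq_le h1 h2 x)

/-- `1.submatrix id l * P` is the projection onto the coordinates `l` along `ker P`. Its
complementary projection sends `x` to the vector with coordinates `x j` off `l` and minus the
contribution of these to `P x` on `l`, which explains the bound. -/
lemma specNorm_proj_le {k n : ℕ} {l : Fin k → Fin n} {P : Matrix (Fin k) (Fin n) ℝ}
    (h1 : P.submatrix id l = 1) (h2 : ∀ i j, |P i j| ≤ 1) :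
    specNorm (1 - (1 : Matrix (Fin n) (Fin n) ℝ).submatrix id l * P)
      ≤ Real.sqrt (k * (n - k) + 1) := by
  have hl := injective_of_submatrix h1
  have hkn : (k : ℝ) ≤ n := by exact_mod_cast (by simpa using Fintype.card_le_of_injective l hl)
  have hN : (0 : ℝ) ≤ k * (n - k) := mul_nonneg k.cast_nonneg (sub_nonneg.2 hkn)
  refine specNorm_le_sqrt _ (by positivity) fun x => ?_
  have hE : ∀ (y : Fin k → ℝ) (j : Fin n),
      ((1 : Matrix (Fin n) (Fin n) ℝ).submatrix id l *ᵥ y) j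
        = ∑ i, if j = l i then y i else 0 := fun y j => by
    simp [mulVec, dotProduct, one_apply]
  have hon : ∀ i, ((1 - (1 : Matrix (Fin n) (Fin n) ℝ).submatrix id l * P) *ᵥ x) (l i)
      = - ∑ j ∈ (Finset.univ.image l)ᶜ, P i j * x j := fun i => by
    rw [sub_mulVec, one_mulVec, ← mulVec_mulVec, Pi.sub_apply, hE]
    simp [hl.eq_iff, mulVec_split h1]
  have hoff : ∀ j ∈ (Finset.univ.image l)ᶜ,
      ((1 - (1 : Matrix (Fin n) (Fin n) ℝ).submatrix id l * P) *ᵥ x) j ^ 2 = x j ^ 2 :=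
    fun j hj => by
    have hj' : ∀ i, j ≠ l i := fun i h => by simp [h] at hj
    rw [sub_mulVec, one_mulVec, ← mulVec_mulVec, Pi.sub_apply, hE]
    simp [hj']
  rw [sum_split hl, sum_split hl (fun j => x j ^ 2), Finset.sum_congr rfl hoff]
  simp only [hon, neg_sq]
  have ht := tail_sq_le h1 h2 x
  have hA : 0 ≤ ∑ i, x (l i) ^ 2 := Finset.sum_nonneg fun i _ => sq_nonneg _
  nlinarith [mul_nonneg hN hA]

lemma specNorm_mul_le {p q r : ℕ} (M : Matrix (Fin p) (Fin q) ℝ) (M' : Matrix (Fin q) (Fin r) ℝ) :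
    specNorm (M * M') ≤ specNorm M * specNorm M' := l2_opNorm_mul M M'

lemma continuous_specNorm {p q : ℕ} :
    Continuous (specNorm : Matrix (Fin p) (Fin q) ℝ → ℝ) := by
  open scoped Matrix.Norms.L2Operator in
  exact (continuous_norm : Continuous fun M : Matrix (Fin p) (Fin q) ℝ => ‖M‖)

lemma specNorm_eq_zero {p q : ℕ} {M : Matrix (Fin p) (Fin q) ℝ} (h : specNorm M = 0) : M = 0 := by
  open scoped Matrix.Norms.L2Operator in
  exact norm_eq_zero.1 (show ‖M‖ = 0 from h)

/-! ### Transfer of the error bound from `B` to `A` -/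

/-- If `B` is interpolated exactly by its columns `l` with coefficients `P`, then the same columns
and coefficients interpolate any `A` up to a multiple of its distance to `B`, because
`A_c P - A = -(A - B) (1 - E P)` where `E` selects the columns `l`. -/
lemma interp_error_le {m n k : ℕ} {A B : Matrix (Fin m) (Fin n) ℝ} {l : Fin k → Fin n}
    {P : Matrix (Fin k) (Fin n) ℝ} (h1 : P.submatrix id l = 1) (h2 : ∀ i j, |P i j| ≤ 1)
    (hB : B.submatrix id l * P = B) :
    specNorm (A.submatrix id l * P - A) ≤ Real.sqrt (k * (n - k) + 1) * specNorm (A - B) := by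
  have hsel : ∀ M : Matrix (Fin m) (Fin n) ℝ,
      M * (1 : Matrix (Fin n) (Fin n) ℝ).submatrix id l = M.submatrix id l := fun M => by
    ext i j
    simp [mul_apply, one_apply]
  have hfac : A.submatrix id l * P - A
      = (B - A) * (1 - (1 : Matrix (Fin n) (Fin n) ℝ).submatrix id l * P) := by
    rw [Matrix.mul_sub, Matrix.mul_one, ← Matrix.mul_assoc, Matrix.sub_mul, hsel, hsel,
      Matrix.sub_mul, hB]
    abel
  have hsymm : specNorm (B - A) = specNorm (A - B) := by
    open scoped Matrix.Norms.L2Operator in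
    exact norm_sub_rev B A
  rw [hfac, mul_comm, ← hsymm]
  exact (specNorm_mul_le _ _).trans
    (mul_le_mul_of_nonneg_left (specNorm_proj_le h1 h2) (norm_nonneg _))

/-! ### Exact interpolation of matrices of rank at most `k` -/

lemma exists_le_finrank_eq {n : ℕ} (W : Submodule ℝ (Fin n → ℝ)) {k : ℕ} (hkn : k ≤ n)
    (hW : Module.finrank ℝ W ≤ k) :
    ∃ W' : Submodule ℝ (Fin n → ℝ), W ≤ W' ∧ Module.finrank ℝ W' = k := by
  induction k, hW using Nat.le_induction with
  | base => exact ⟨W, le_rfl, rfl⟩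
  | succ k _ ih =>
    obtain ⟨W', hle, hk⟩ := ih (Nat.le_of_succ_le hkn)
    obtain ⟨v, -, hv⟩ := SetLike.exists_of_lt (Submodule.lt_top_of_finrank_lt_finrank
      (s := W') (by rw [hk]; simpa using hkn))
    exact ⟨W' ⊔ Submodule.span ℝ {v}, hle.trans le_sup_left,
      by rw [Submodule.finrank_sup_span_singleton hv, hk]⟩

/-- A matrix of rank at most `k` factors through a `k`-row matrix whose columns span `ℝᵏ`. -/
lemma exists_factor {m n k : ℕ} (B : Matrix (Fin m) (Fin n) ℝ) (hkn : k ≤ n) (hB : B.rank ≤ k) :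
    ∃ (C : Matrix (Fin m) (Fin k) ℝ) (D : Matrix (Fin k) (Fin n) ℝ), D.rank = k ∧ B = C * D := by
  rw [rank_eq_finrank_span_row] at hB
  obtain ⟨W, hW, hWk⟩ := exists_le_finrank_eq _ hkn hB
  let b := Module.finBasisOfFinrankEq ℝ W hWk
  have hmem : ∀ i, B i ∈ W := fun i => hW (Submodule.subset_span ⟨i, rfl⟩)
  refine ⟨.of fun i r => b.repr ⟨B i, hmem i⟩ r, .of fun r => (b r : Fin n → ℝ), ?_, ?_⟩
  · have hli : LinearIndependent ℝ (Matrix.of fun r => (b r : Fin n → ℝ)).row :=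
      b.linearIndependent.map' W.subtype W.ker_subtype
    simpa using hli.rank_matrix
  · ext i j
    have h := congrArg (fun w : W => (w : Fin n → ℝ) j) (b.sum_repr ⟨B i, hmem i⟩)
    simp only [Submodule.coe_sum, Submodule.coe_smul, Finset.sum_apply, Pi.smul_apply,
      smul_eq_mul] at h
    rw [mul_apply]
    exact h.symm

lemma exists_minor_ne_zero {n k : ℕ} (D : Matrix (Fin k) (Fin n) ℝ) (hD : D.rank = k) :
    ∃ l : Fin k → Fin n, (D.submatrix id l).det ≠ 0 := by
  rw [rank_eq_finrank_span_cols] at hD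
  obtain ⟨f, hf, -, hli⟩ := Submodule.exists_fun_fin_finrank_span_eq ℝ (Set.range D.col)
  choose g hg using hf
  refine ⟨fun i => g (Fin.cast hD.symm i), ?_⟩
  have h : LinearIndependent ℝ (D.submatrix id fun i => g (Fin.cast hD.symm i)).col := by
    have : (D.submatrix id fun i => g (Fin.cast hD.symm i)).col = f ∘ Fin.cast hD.symm := by
      ext i j
      exact congrFun (hg (Fin.cast hD.symm i)) j
    rw [this]
    exact hli.comp _ (Fin.cast_injective _)
  exact ((isUnit_iff_isUnit_det _).1 (linearIndependent_cols_iff_isUnit.1 h)).ne_zero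

/-- A matrix of rank at most `k` is interpolated exactly. The columns chosen maximize the modulus
of the `k × k` minors of a full-rank factor, so that by Cramer's rule every coefficient is a
quotient of two minors, the larger one in the denominator. -/
lemma exists_exact_interp {m n k : ℕ} (B : Matrix (Fin m) (Fin n) ℝ) (hkn : k ≤ n)
    (hB : B.rank ≤ k) :
    ∃ (l : Fin k → Fin n) (P : Matrix (Fin k) (Fin n) ℝ),
      P.submatrix id l = 1 ∧ (∀ i j, |P i j| ≤ 1) ∧ B.submatrix id l * P = B := by
  obtain ⟨C, D, hD, rfl⟩ := exists_factor B hkn hB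
  obtain ⟨l₀, hl₀⟩ := exists_minor_ne_zero D hD
  have : Nonempty (Fin k → Fin n) := ⟨l₀⟩
  obtain ⟨l, hmax⟩ := Finite.exists_max fun l : Fin k → Fin n => |(D.submatrix id l).det|
  have hpos : 0 < |(D.submatrix id l).det| := (abs_pos.2 hl₀).trans_le (hmax l₀)
  have hu : IsUnit (D.submatrix id l).det := (abs_pos.1 hpos).isUnit
  refine ⟨l, (D.submatrix id l)⁻¹ * D, ?_, fun i j => ?_, ?_⟩
  · exact nonsing_inv_mul (D.submatrix id l) hu
  · have hcol : (D.submatrix id l).updateCol i (D.col j)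
        = D.submatrix id (Function.update l i j) := by
      ext a b
      by_cases hb : b = i
      · subst hb; simp
      · simp [hb]
    have hcr := congrFun (det_smul_inv_mulVec_eq_cramer (D.submatrix id l) (D.col j) hu) i
    rw [cramer_apply, hcol] at hcr
    have hle := hmax (Function.update l i j)
    have hcr' : (D.submatrix id l).det * ((D.submatrix id l)⁻¹ * D) i j
        = (D.submatrix id (Function.update l i j)).det := hcr
    rw [← hcr', abs_mul] at hle
    exact le_of_mul_le_mul_left (by simpa using hle) hpos
  · have hsub : (C * D).submatrix id l = C * D.submatrix id l := rfl
    rw [hsub, ← Matrix.mul_assoc, Matrix.mul_assoc C, mul_nonsing_inv _ hu, Matrix.mul_one]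

/-! ### An interpolation independent of the competitor -/

/-- One interpolation of `A` works simultaneously for every competitor `B`: the admissible pairs
`(l, P)` form a compact set, on which the interpolation error attains its minimum. -/
lemma exists_best_interp {m n k : ℕ} (A : Matrix (Fin m) (Fin n) ℝ) (hkn : k ≤ n) :
    ∃ (l : Fin k → Fin n) (P : Matrix (Fin k) (Fin n) ℝ),
      P.submatrix id l = 1 ∧ (∀ i j, |P i j| ≤ 1) ∧
      ∀ B : Matrix (Fin m) (Fin n) ℝ, B.rank ≤ k →
        specNorm (A.submatrix id l * P - A)
          ≤ Real.sqrt (k * (n - k) + 1) * specNorm (A - B) := by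
  let K : Set ((Fin k → Fin n) × Matrix (Fin k) (Fin n) ℝ) :=
    {q | q.2.submatrix id q.1 = 1 ∧ ∀ i j, |q.2 i j| ≤ 1}
  have hbox : IsCompact {P : Matrix (Fin k) (Fin n) ℝ | ∀ i j, |P i j| ≤ 1} := by
    have h : IsCompact (Set.pi Set.univ fun _ : Fin k =>
        Set.pi Set.univ fun _ : Fin n => Set.Icc (-1 : ℝ) 1) :=
      isCompact_univ_pi fun _ => isCompact_univ_pi fun _ => isCompact_Icc
    have he : {P : Matrix (Fin k) (Fin n) ℝ | ∀ i j, |P i j| ≤ 1} =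
        Set.pi Set.univ fun _ : Fin k => Set.pi Set.univ fun _ : Fin n => Set.Icc (-1 : ℝ) 1 := by
      ext P
      exact ⟨fun hP i _ j _ => abs_le.1 (hP i j),
        fun hP i j => abs_le.2 (hP i trivial j trivial)⟩
    rw [he]
    exact h
  have hcl : IsClosed {q : (Fin k → Fin n) × Matrix (Fin k) (Fin n) ℝ |
      q.2.submatrix id q.1 = 1} := by
    refine isClosed_eq (continuous_prod_of_discrete_left.2 fun l => ?_) continuous_const
    exact continuous_id.matrix_submatrix id l
  have hK : IsCompact K := by
    have h := (isCompact_univ (X := Fin k → Fin n)).prod hbox |>.inter_left hcl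
    convert h using 1
    ext q
    simp [K]
  have hcont : Continuous fun q : (Fin k → Fin n) × Matrix (Fin k) (Fin n) ℝ =>
      specNorm (A.submatrix id q.1 * q.2 - A) :=
    continuous_prod_of_discrete_left.2 fun l =>
      continuous_specNorm.comp (f := fun P => A.submatrix id l * P - A)
        ((continuous_const.matrix_mul continuous_id).sub continuous_const)
  have hne : K.Nonempty := by
    obtain ⟨l, P, h1, h2, -⟩ :=
      exists_exact_interp (0 : Matrix (Fin m) (Fin n) ℝ) hkn (by simp)
    exact ⟨(l, P), h1, h2⟩
  obtain ⟨⟨l, P⟩, ⟨h1, h2⟩, hmin⟩ := hK.exists_isMinOn hne hcont.continuousOn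
  refine ⟨l, P, h1, h2, fun B hB => ?_⟩
  obtain ⟨l', P', h_one, h_bd, h_rec⟩ := exists_exact_interp B hkn hB
  exact (hmin (show (l', P') ∈ K from ⟨h_one, h_bd⟩)).trans (interp_error_le h_one h_bd h_rec)

/-- Existence of a rank-`k` interpolative decomposition of an
`m×n` matrix `A`: a column skeleton `A_c = A.submatrix id l` and a coefficient
matrix `P` satisfying the six properties of Lemma 2.2 (Martinsson–Rokhlin–Tygert).
Property 4 ("the smallest singular value of `P` is at least 1") is expressed as
`‖Pᵀ x‖ ≥ ‖x‖` for every vector `x`. -/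
theorem stmt16 {m n : ℕ} (A : Matrix (Fin m) (Fin n) ℝ) (k : ℕ)
    (hk : 0 < k) (hkm : k ≤ m) (hkn : k ≤ n) :
    ∃ (l : Fin k → Fin n) (P : Matrix (Fin k) (Fin n) ℝ),
      Function.Injective l ∧
      -- (1) some subset of the columns of P makes up the k×k identity matrix
      (∃ g : Fin k → Fin n, Function.Injective g ∧ P.submatrix id g = 1) ∧
      -- (2) no entry of P exceeds 1 in absolute value
      (∀ i j, |P i j| ≤ 1) ∧
      -- (3) spectral norm bound for P
      specNorm P ≤ Real.sqrt (k * (n - k) + 1) ∧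
      -- (4) smallest singular value of P is at least 1
      (∀ x : Fin k → ℝ,
        Real.sqrt (∑ i, (x i) ^ 2) ≤ Real.sqrt (∑ j, (∑ i, P i j * x i) ^ 2)) ∧
      -- (5) exact reconstruction in the degenerate cases
      ((k = m ∨ k = n) → A.submatrix id l * P = A) ∧
      -- (6) error bound in terms of the (k+1)-st singular value
      (k < m → k < n →
        specNorm (A.submatrix id l * P - A) ≤ Real.sqrt (k * (n - k) + 1) * tauSucc A k) := by
  obtain ⟨l, P, h1, h2, hmain⟩ := exists_best_interp A hkn
  have hl := injective_of_submatrix h1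
  refine ⟨l, P, hl, ⟨l, hl, h1⟩, h2, specNorm_coeff_le h1 h2, fun x => ?_, fun h => ?_,
    fun _ _ => ?_⟩
  · refine Real.sqrt_le_sqrt ?_
    rw [sum_split hl]
    have hx : ∀ i, ∑ i', P i' (l i) * x i' = x i := fun i => by
      have h : ∀ i', P i' (l i) = (1 : Matrix (Fin k) (Fin k) ℝ) i' i := fun i' =>
        congrFun (congrFun h1 i') i
      simp [h, one_apply]
    simp only [hx]
    exact le_add_of_nonneg_right (Finset.sum_nonneg fun j _ => sq_nonneg _)
  · have hA : A.rank ≤ k := by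
      rcases h with h | h
      · simpa [h] using A.rank_le_height
      · simpa [h] using A.rank_le_width
    -- `A` itself is a competitor, at distance zero.
    have h0 := hmain A hA
    have hz : specNorm (0 : Matrix (Fin m) (Fin n) ℝ) = 0 := by simp [specNorm]
    rw [sub_self, hz, mul_zero] at h0
    exact sub_eq_zero.1 (specNorm_eq_zero (le_antisymm h0 (norm_nonneg _)))
  · have hc : 0 < Real.sqrt ((k : ℝ) * (n - k) + 1) := by
      have hkn' : (k : ℝ) ≤ n := by exact_mod_cast hkn
      have := mul_nonneg (Nat.cast_nonneg (α := ℝ) k) (sub_nonneg.2 hkn')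
      positivity
    rw [← div_le_iff₀' hc]
    refine le_csInf ⟨_, 0, by simp, rfl⟩ ?_
    rintro t ⟨B, hB, rfl⟩
    rw [div_le_iff₀' hc]
    exact hmain B hB
end
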